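/- Let F = GaloisField 2 7 and f : F → F the Gold APN function f(x) = x³. Then dA(f) = 117 = 2⁷ − 11; that is, every affine map A : F → F satisfies |{x ∈ F : f(x) ≠ A(x)}| ≥ 117, and there exists an affine map A : F → F with |{x ∈ F : f(x) ≠ A(x)}| = 117. -/

import Mathlib

/-- The distance of `f : V → W` to the set of affine maps:
the minimum Hamming distance `|{x | f x ≠ A x}|` over affine maps `A x = L x + c`. -/
noncomputable def dA {V W : Type*} [AddCommGroup V] [AddCommGroup W]
    [Module (ZMod 2) V] [Module (ZMod 2) W] (f : V → W) : ℕ :=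
  sInf { d : ℕ | ∃ (L : V →ₗ[ZMod 2] W) (c : W), d = {x | f x ≠ L x + c}.ncard }

namespace GoldCube

/-! ### Table arithmetic in the field with 128 elements

Elements are coded by natural numbers below `128`, the bits being the coordinates with respect to
the powers of a root `α` of `X ^ 7 + X + 1`. The functions below are evaluated by the kernel,
hence the direct use of `Nat.xor` and its relatives. -/

local notation:65 a:65 "⊕₂" b:66 => Nat.xor a b

/-- The `i`-th entry of a table of seven-bit numbers, stored one per byte. -/
def entry (T i : ℕ) : ℕ := Nat.land (Nat.shiftRight T (Nat.mul 8 i)) 127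

/-- The code of `α ^ i`. -/
def expCode (i : ℕ) : ℕ := entry
  179343145154286468999787348634966713635650659649736789414148021345911460223011165278843182007619610859593311888318488159128904538903604560337988443507032135323526942362685217139502154598999203791264386173164389839521109337246772858340806352412195616840658205728602791057560876167481289674224934752276972033
  (Nat.mod i 127)

/-- The discrete logarithm to the base `α` of the element with code `n`. -/
def logCode (n : ℕ) : ℕ := entry
  85299566321267760859882959404293287561914986092030414439102485899448894882442126012717921087539931761252616783538567363632140652556524324457790506479341977747011430397942856861852895404352684004849115400841281323173832260191922844437182647048573120541323249961997723919153927873044867097585891997657669369983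
  n

/-- The code of the cube of the element with code `n`. -/
def cubeCode (n : ℕ) : ℕ := entry
  35393957386426235665540830296352810553328858759785430372807922196131413903559326420226494279052796565009821720864283627741323687907078829161325145239951337462579364619907693523538322258507992771204374601007455333263995905485982757377127296356534396075817087568067981231030791281872703588914822362058765893888
  n

/-- The logarithm of some `t` with `t ^ 2 + t + 1 = α ^ i`, or `127` if there is none. -/
def rootCode (i : ℕ) : ℕ := entry
  89320004575915131157087598941484107393502498817879106560897598765265487227908781868498711703427640064214420067202720938481755484939829189417458436043794623990437455253518257749196299196116416829254358114883546039725686773247867270265333227761957279853343722767338730748234194279380527296600316188273382752000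
  (Nat.mod i 127)

/-- The logarithm of `z / m`, where `z ^ 3 + (z + m) ^ 3 = s`, or `127` if there is no such `z`. -/
def ratioCode (m s : ℕ) : ℕ :=
  rootCode (Nat.sub (Nat.add (logCode s) 381) (Nat.mul 3 (logCode m)))

/-- Checks `k` on both members of the pair `z, w` with `z + w = m` and `z ^ 3 + w ^ 3 = s`. -/
def forPair (m s : ℕ) (k : ℕ → Bool) : Bool :=
  bif Nat.beq m 0 || Nat.beq s 0 || Nat.beq (ratioCode m s) 127 then true else
    let z := expCode (Nat.add (logCode m) (ratioCode m s))
    k z && k (z ⊕₂ m)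

/-- Checks that no configuration has `a₀ = 0`, `b₀ = 1` and `a₁ + b₁` coded by `t`. -/
def search (t : ℕ) : Bool :=
  (List.range 128).all fun a₁ =>
    let A₁ := cubeCode a₁ ⊕₂ cubeCode (a₁ ⊕₂ t)
    forPair (1 ⊕₂ t) (1 ⊕₂ A₁) fun a₂ =>
      let A₂ := cubeCode a₂ ⊕₂ cubeCode (a₂ ⊕₂ (1 ⊕₂ t))
      let m := a₁ ⊕₂ a₂
      let s := cubeCode a₁ ⊕₂ cubeCode a₂
      (List.range 128).all fun c₀ => Nat.ble c₀ 1 ||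
        forPair (m ⊕₂ c₀) (s ⊕₂ cubeCode c₀) fun c₁ =>
          let c₂ := m ⊕₂ c₀ ⊕₂ c₁
          Nat.ble c₁ 1 || Nat.ble c₂ 1 ||
            forPair (c₀ ⊕₂ c₁ ⊕₂ (1 ⊕₂ t)) (cubeCode c₀ ⊕₂ cubeCode c₁ ⊕₂ A₂) fun d₀ =>
              let d₂ := m ⊕₂ c₁ ⊕₂ t ⊕₂ d₀
              ! Nat.beq (cubeCode c₀ ⊕₂ cubeCode d₀ ⊕₂ A₁) (cubeCode c₂ ⊕₂ cubeCode d₂)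

theorem search_eq_true : search 2 = true ∧ search 12 = true ∧ search 24 = true := by
  decide +kernel

theorem ratioCode_spec : ∀ z < 128, ∀ w < 128, z ≠ w →
    (Nat.beq (z ⊕₂ w) 0 || Nat.beq (cubeCode z ⊕₂ cubeCode w) 0 ||
      Nat.beq (ratioCode (z ⊕₂ w) (cubeCode z ⊕₂ cubeCode w)) 127) = false ∧
    (expCode (Nat.add (logCode (z ⊕₂ w))
        (ratioCode (z ⊕₂ w) (cubeCode z ⊕₂ cubeCode w))) = z ∨
      expCode (Nat.add (logCode (z ⊕₂ w))
        (ratioCode (z ⊕₂ w) (cubeCode z ⊕₂ cubeCode w))) = w) := by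
  decide +kernel

theorem forPair_spec {z w : ℕ} (hz : z < 128) (hw : w < 128) (h : z ≠ w) {k : ℕ → Bool}
    (hk : forPair (z ⊕₂ w) (cubeCode z ⊕₂ cubeCode w) k = true) : k z = true := by
  obtain ⟨h₁, h₂⟩ := ratioCode_spec z hz w hw h
  have e : w ⊕₂ (z ⊕₂ w) = z := by
    change w ^^^ (z ^^^ w) = z
    rw [Nat.xor_comm z, Nat.xor_xor_cancel_left]
  rw [forPair, h₁, cond_false, Bool.and_eq_true] at hk
  rcases h₂ with h₂ | h₂ <;> rw [h₂] at hk
  · exact hk.1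
  · rw [e] at hk
    exact hk.2

theorem pow_128_eq_self {R : Type*} [CommRing R] [CharP R 2] {α : R} (hα : α ^ 7 = α + 1) :
    α ^ 128 = α := by
  have h2 : (2 : R) = 0 := CharTwo.two_eq_zero
  have h8 : α ^ 8 = α ^ 2 + α := by rw [pow_succ, hα]; ring
  have h16 : α ^ 16 = α ^ 4 + α ^ 2 := by
    rw [show 16 = 8 * 2 from rfl, pow_mul, h8, CharTwo.add_sq]; ring
  have h32 : α ^ 32 = α ^ 4 + α ^ 2 + α := by
    rw [show 32 = 16 * 2 from rfl, pow_mul, h16, CharTwo.add_sq, ← pow_mul, ← pow_mul, h8]; ring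
  have h64 : α ^ 64 = α ^ 4 + α := by
    rw [show 64 = 32 * 2 from rfl, pow_mul, h32, CharTwo.add_sq, CharTwo.add_sq, ← pow_mul,
      ← pow_mul, h8]
    linear_combination α ^ 2 * h2
  rw [show 128 = 64 * 2 from rfl, pow_mul, h64, CharTwo.add_sq, ← pow_mul, h8]
  linear_combination α ^ 2 * h2

section Decode

variable {F : Type*} [Field F]

/-- The element with code `n`: the bits of `n` are its coordinates. -/
def decode (α : F) (n : ℕ) : F := ∑ i ∈ Finset.range 7, if n.testBit i then α ^ i else 0

theorem decode_zero (α : F) : decode α 0 = 0 := by simp [decode]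

theorem decode_one (α : F) : decode α 1 = 1 := by
  simp [decode, Finset.sum_range_succ, Nat.testBit_succ]

variable [CharP F 2]

theorem decode_xor (α : F) (a b : ℕ) : decode α (a ⊕₂ b) = decode α a + decode α b := by
  rw [decode, decode, decode, ← Finset.sum_add_distrib]
  refine Finset.sum_congr rfl fun i _ => ?_
  have h : (a ⊕₂ b).testBit i = (a.testBit i ^^ b.testBit i) := Nat.testBit_xor a b i
  rw [h]
  cases a.testBit i <;> cases b.testBit i <;> simp [CharTwo.add_self_eq_zero]

/-- Multiplication by `α` on codes. -/
def shiftCode (n : ℕ) : ℕ := 2 * n ^^^ if n.testBit 6 then 131 else 0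

theorem decode_shiftCode {α : F} (hα : α ^ 7 = α + 1) (n : ℕ) :
    decode α (shiftCode n) = α * decode α n := by
  have h : decode α (shiftCode n) = decode α (2 * n) + decode α (if n.testBit 6 then 131 else 0) :=
    decode_xor α _ _
  have h₂ : decode α (2 * n) + (if n.testBit 6 then α ^ 7 else 0) = α * decode α n := by
    have ht (i : ℕ) : (2 * n).testBit (i + 1) = n.testBit i := by
      rw [Nat.testBit_succ, Nat.mul_div_cancel_left _ two_pos]
    rw [decode, decode, Finset.sum_range_succ', Finset.sum_range_succ _ 6, mul_add, Finset.mul_sum]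
    simp [ht, mul_ite, ← pow_succ']
  rw [h, ← h₂]
  congr 1
  split_ifs
  · rw [hα]
    simp [decode, Finset.sum_range_succ, Nat.testBit_succ, add_comm]
  · exact decode_zero α

theorem pow_127_eq_one {α : F} (hα : α ^ 7 = α + 1) : α ^ 127 = 1 := by
  have h0 : α ≠ 0 := by rintro rfl; norm_num at hα
  exact mul_right_cancel₀ h0 (by rw [← pow_succ, pow_128_eq_self hα, one_mul])

theorem expCode_succ : ∀ k < 126, expCode (k + 1) = shiftCode (expCode k) := by decide +kernel

theorem decode_expCode {α : F} (hα : α ^ 7 = α + 1) (k : ℕ) : decode α (expCode k) = α ^ k := by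
  have key : ∀ k < 127, decode α (expCode k) = α ^ k := by
    intro k hk
    induction k with
    | zero => rw [show expCode 0 = 1 from by decide +kernel, decode_one, pow_zero]
    | succ k ih =>
      rw [expCode_succ k (by lia), decode_shiftCode hα, ih (by lia), pow_succ']
  have h : expCode k = expCode (k % 127) := by
    change entry _ (k % 127) = entry _ (k % 127 % 127)
    rw [Nat.mod_mod]
  rw [h, key _ (Nat.mod_lt _ (by norm_num)), ← pow_eq_pow_mod k (pow_127_eq_one hα)]

theorem expCode_logCode : ∀ n < 128, n ≠ 0 → expCode (logCode n) = n := by decide +kernel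

theorem cubeCode_eq : ∀ n < 128, n ≠ 0 → cubeCode n = expCode (3 * logCode n) := by
  decide +kernel

theorem decode_eq_pow {α : F} (hα : α ^ 7 = α + 1) {n : ℕ} (hn : n < 128) (h : n ≠ 0) :
    decode α n = α ^ logCode n := by
  conv_lhs => rw [← expCode_logCode n hn h]
  exact decode_expCode hα _

theorem decode_cubeCode {α : F} (hα : α ^ 7 = α + 1) {n : ℕ} (hn : n < 128) :
    decode α (cubeCode n) = decode α n ^ 3 := by
  rcases eq_or_ne n 0 with rfl | h
  · rw [show cubeCode 0 = 0 from by decide +kernel, decode_zero]; norm_num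
  · rw [cubeCode_eq n hn h, decode_expCode hα, decode_eq_pow hα hn h, ← pow_mul, mul_comm]

theorem xor_lt {a b : ℕ} (ha : a < 128) (hb : b < 128) : a ⊕₂ b < 128 :=
  Nat.xor_lt_two_pow (n := 7) ha hb

theorem cubeCode_lt (n : ℕ) : cubeCode n < 128 :=
  Nat.lt_of_le_of_lt Nat.and_le_right (by norm_num)

theorem decode_injOn {α : F} (hα : α ^ 7 = α + 1) : Set.InjOn (decode α) (Set.Iio 128) := by
  intro a ha b hb h
  have h0 : α ≠ 0 := by rintro rfl; norm_num at hα
  have hz : decode α (a ⊕₂ b) = 0 := by rw [decode_xor, h, CharTwo.add_self_eq_zero]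
  by_contra hab
  refine pow_ne_zero (logCode (a ⊕₂ b)) h0 ?_
  rw [← decode_eq_pow hα (xor_lt ha hb) fun h => hab (Nat.xor_eq_zero_iff.1 h), hz]

theorem exists_decode [Fintype F] (hF : Fintype.card F = 128) {α : F} (hα : α ^ 7 = α + 1)
    (x : F) : ∃ n < 128, decode α n = x := by
  have h : Function.Bijective fun n : Fin 128 => decode α n :=
    (Fintype.bijective_iff_injective_and_card _).2
      ⟨fun a b h => Fin.ext (decode_injOn hα a.2 b.2 h), by simp [hF]⟩
  obtain ⟨n, hn⟩ := h.2 x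
  exact ⟨n, n.2, hn⟩

end Decode

section Config

variable {F : Type*} [Field F]

/-- Twelve distinct elements `a i, b i, c i, d i` (the rows of `x`), for which the power sums of
exponent at most three vanish on `{a i, b i}` and on `{a i, c i}`, and agree on the three columns. -/
structure IsConfig (x : Fin 4 → Fin 3 → F) : Prop where
  injective : Function.Injective (Function.uncurry x)
  sum_ab : ∀ k ≤ 3, ∑ i, (x 0 i ^ k + x 1 i ^ k) = 0
  sum_ac : ∀ k ≤ 3, ∑ i, (x 0 i ^ k + x 2 i ^ k) = 0
  sum_abcd : ∀ k ≤ 3, ∀ i j, ∑ r, x r i ^ k = ∑ r, x r j ^ k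

namespace IsConfig

variable {x : Fin 4 → Fin 3 → F}

theorem ne (h : IsConfig x) {r s : Fin 4} {i j : Fin 3} (hne : (r, i) ≠ (s, j)) : x r i ≠ x s j :=
  fun e => hne (h.injective (a₁ := (r, i)) (a₂ := (s, j)) e)

theorem perm (h : IsConfig x) (σ : Equiv.Perm (Fin 3)) : IsConfig fun r i => x r (σ i) where
  injective := h.injective.comp ((Equiv.refl (Fin 4)).prodCongr σ).injective
  sum_ab k hk := (Equiv.sum_comp σ fun i => x 0 i ^ k + x 1 i ^ k).trans (h.sum_ab k hk)
  sum_ac k hk := (Equiv.sum_comp σ fun i => x 0 i ^ k + x 2 i ^ k).trans (h.sum_ac k hk)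
  sum_abcd k hk i j := h.sum_abcd k hk (σ i) (σ j)

theorem affine (h : IsConfig x) {u : F} (hu : u ≠ 0) (v : F) :
    IsConfig fun r i => u * x r i + v where
  injective := ((add_left_injective v).comp (mul_right_injective₀ hu)).comp h.injective
  sum_ab k hk := by
    have h₀ := h.sum_ab 0 (by lia)
    have h₁ := h.sum_ab 1 (by lia)
    have h₂ := h.sum_ab 2 (by lia)
    have h₃ := h.sum_ab 3 (by lia)
    simp only [Fin.sum_univ_three, pow_zero] at h₀ h₁ h₂ h₃ ⊢
    interval_cases k
    · linear_combination h₀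
    · linear_combination u * h₁ + v * h₀
    · linear_combination u ^ 2 * h₂ + 2 * u * v * h₁ + v ^ 2 * h₀
    · linear_combination u ^ 3 * h₃ + 3 * u ^ 2 * v * h₂ + 3 * u * v ^ 2 * h₁ + v ^ 3 * h₀
  sum_ac k hk := by
    have h₀ := h.sum_ac 0 (by lia)
    have h₁ := h.sum_ac 1 (by lia)
    have h₂ := h.sum_ac 2 (by lia)
    have h₃ := h.sum_ac 3 (by lia)
    simp only [Fin.sum_univ_three, pow_zero] at h₀ h₁ h₂ h₃ ⊢
    interval_cases k
    · linear_combination h₀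
    · linear_combination u * h₁ + v * h₀
    · linear_combination u ^ 2 * h₂ + 2 * u * v * h₁ + v ^ 2 * h₀
    · linear_combination u ^ 3 * h₃ + 3 * u ^ 2 * v * h₂ + 3 * u * v ^ 2 * h₁ + v ^ 3 * h₀
  sum_abcd k hk i j := by
    have h₁ := h.sum_abcd 1 (by lia) i j
    have h₂ := h.sum_abcd 2 (by lia) i j
    have h₃ := h.sum_abcd 3 (by lia) i j
    simp only [Fin.sum_univ_four] at h₁ h₂ h₃ ⊢
    interval_cases k
    · ring
    · linear_combination u * h₁
    · linear_combination u ^ 2 * h₂ + 2 * u * v * h₁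
    · linear_combination u ^ 3 * h₃ + 3 * u ^ 2 * v * h₂ + 3 * u * v ^ 2 * h₁

theorem sq [CharP F 2] (h : IsConfig x) : IsConfig fun r i => x r i ^ 2 where
  injective := (frobenius_inj F 2).comp h.injective
  sum_ab k hk := by
    simp only [pow_right_comm _ 2 k, ← CharTwo.add_sq, ← CharTwo.sum_sq, h.sum_ab k hk,
      zero_pow two_ne_zero]
  sum_ac k hk := by
    simp only [pow_right_comm _ 2 k, ← CharTwo.add_sq, ← CharTwo.sum_sq, h.sum_ac k hk,
      zero_pow two_ne_zero]
  sum_abcd k hk i j := by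
    simp only [pow_right_comm _ 2 k, ← CharTwo.sum_sq, h.sum_abcd k hk i j]

end IsConfig

/-- There is a configuration with `a₁ + b₁ = t (a₀ + b₀)`. -/
def HasRatio (t : F) : Prop :=
  ∃ x : Fin 4 → Fin 3 → F, IsConfig x ∧ x 0 1 + x 1 1 = t * (x 0 0 + x 1 0)

variable [CharP F 2]

theorem HasRatio.sq {t : F} : HasRatio t → HasRatio (t ^ 2) := by
  rintro ⟨x, h, hx⟩
  refine ⟨_, h.sq, ?_⟩
  rw [← CharTwo.add_sq, ← CharTwo.add_sq, hx, mul_pow]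

theorem HasRatio.inv {t : F} : HasRatio t → HasRatio t⁻¹ := by
  rintro ⟨x, h, hx⟩
  refine ⟨_, h.perm (Equiv.swap 0 1), ?_⟩
  have ht : t ≠ 0 := by
    rintro rfl
    rw [zero_mul, CharTwo.add_eq_zero] at hx
    exact h.ne (by decide) hx
  simp only [Equiv.swap_apply_left, Equiv.swap_apply_right]
  rw [hx, inv_mul_cancel_left₀ ht]

theorem HasRatio.one_add {t : F} : HasRatio t → HasRatio (1 + t) := by
  rintro ⟨x, h, hx⟩
  refine ⟨_, h.perm (Equiv.swap 1 2), ?_⟩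
  have hs := h.sum_ab 1 (by lia)
  simp only [Fin.sum_univ_three, pow_one, CharTwo.add_eq_zero] at hs
  simp only [Equiv.swap_apply_left, Equiv.swap_apply_of_ne_of_ne (a := (1 : Fin 3)) (b := 2)
    (x := 0) (by decide) (by decide)]
  rw [← hs, hx]
  ring

theorem HasRatio.exists_normalized {t : F} : HasRatio t →
    ∃ x : Fin 4 → Fin 3 → F, IsConfig x ∧ x 0 0 = 0 ∧ x 1 0 = 1 ∧ x 0 1 + x 1 1 = t := by
  rintro ⟨x, h, hx⟩
  have hu : x 0 0 + x 1 0 ≠ 0 := fun e => h.ne (by decide) (CharTwo.add_eq_zero.1 e)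
  refine ⟨_, h.affine (inv_ne_zero hu) ((x 0 0 + x 1 0)⁻¹ * x 0 0), ?_, ?_, ?_⟩
  · exact CharTwo.add_self_eq_zero _
  · rw [← mul_add, add_comm (x 1 0), inv_mul_cancel₀ hu]
  · rw [add_add_add_comm, CharTwo.add_self_eq_zero, add_zero, ← mul_add, hx, mul_comm, mul_assoc,
      mul_inv_cancel₀ hu, mul_one]

theorem not_hasRatio_of_search [Fintype F] (hF : Fintype.card F = 128) {α : F}
    (hα : α ^ 7 = α + 1) {t : ℕ} (ht : t < 128) (hs : search t = true) :
    ¬ HasRatio (decode α t) := by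
  intro hr
  obtain ⟨x, h, hx₀, hx₁, hxt⟩ := hr.exists_normalized
  choose n hn hnx using fun r i => exists_decode hF hα (x r i)
  have e1 := decode_one α
  have hne {r s : Fin 4} {i j : Fin 3} (hrs : (r, i) ≠ (s, j)) : n r i ≠ n s j := fun e =>
    h.ne hrs (by rw [← hnx, ← hnx, e])
  have heq {a b : ℕ} (ha : a < 128) (hb : b < 128) (h : decode α a = decode α b) : a = b :=
    decode_injOn hα ha hb h
  have n00 : n 0 0 = 0 := heq (hn _ _) (by lia) (by rw [hnx, hx₀, decode_zero])
  have n10 : n 1 0 = 1 := heq (hn _ _) (by lia) (by rw [hnx, hx₁, e1])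
  have two_le {r : Fin 4} {i : Fin 3} (h₀ : (r, i) ≠ (0, 0)) (h₁ : (r, i) ≠ (1, 0)) :
      Nat.ble (n r i) 1 = false := by
    have := hne h₀
    have := hne h₁
    rw [Bool.eq_false_iff, Ne, Nat.ble_eq]
    lia
  have h2 : (2 : F) = 0 := CharTwo.two_eq_zero
  have ab := h.sum_ab 1 (by lia)
  have ab₃ := h.sum_ab 3 (by lia)
  have ac := h.sum_ac 1 (by lia)
  have ac₃ := h.sum_ac 3 (by lia)
  have abcd := h.sum_abcd 1 (by lia) 0 1
  have abcd₃ := h.sum_abcd 3 (by lia) 0 1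
  have abcd' := h.sum_abcd 1 (by lia) 0 2
  have abcd₃' := h.sum_abcd 3 (by lia) 0 2
  simp only [Fin.sum_univ_three, Fin.sum_univ_four, pow_one, hx₀, hx₁] at ab ab₃ ac ac₃ abcd abcd₃
  simp only [Fin.sum_univ_four, pow_one, hx₀, hx₁] at abcd' abcd₃'
  have hc (r i) : decode α (cubeCode (n r i)) = x r i ^ 3 := by
    rw [decode_cubeCode hα (hn r i), hnx]
  have lt := @xor_lt
  have lt₃ := cubeCode_lt
  have b₁ : n 0 1 ⊕₂ t = n 1 1 := heq (lt (hn _ _) ht) (hn _ _) <| by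
    simp only [decode_xor, hnx]; grind
  have a₂b₂ : 1 ⊕₂ t = n 0 2 ⊕₂ n 1 2 :=
    heq (lt (by lia) ht) (lt (hn _ _) (hn _ _)) <| by
      simp only [decode_xor, hnx, e1]; grind
  have b₂ : n 0 2 ⊕₂ (n 0 2 ⊕₂ n 1 2) = n 1 2 :=
    heq (lt (hn _ _) (lt (hn _ _) (hn _ _))) (hn _ _) <| by
      simp only [decode_xor, hnx]; grind
  have a₂b₂' : 1 ⊕₂ (cubeCode (n 0 1) ⊕₂ cubeCode (n 1 1)) =
      cubeCode (n 0 2) ⊕₂ cubeCode (n 1 2) :=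
    heq (lt (by lia) (lt (lt₃ _) (lt₃ _))) (lt (lt₃ _) (lt₃ _)) <| by
      simp only [decode_xor, hc, e1]; grind
  have c₁c₂ : n 0 1 ⊕₂ n 0 2 ⊕₂ n 2 0 = n 2 1 ⊕₂ n 2 2 :=
    heq (lt (lt (hn _ _) (hn _ _)) (hn _ _)) (lt (hn _ _) (hn _ _)) <| by
      simp only [decode_xor, hnx]; grind
  have c₂ : n 2 1 ⊕₂ n 2 2 ⊕₂ n 2 1 = n 2 2 :=
    heq (lt (lt (hn _ _) (hn _ _)) (hn _ _)) (hn _ _) <| by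
      simp only [decode_xor, hnx]; grind
  have c₁c₂' : cubeCode (n 0 1) ⊕₂ cubeCode (n 0 2) ⊕₂ cubeCode (n 2 0) =
      cubeCode (n 2 1) ⊕₂ cubeCode (n 2 2) :=
    heq (lt (lt (lt₃ _) (lt₃ _)) (lt₃ _)) (lt (lt₃ _) (lt₃ _)) <| by
      simp only [decode_xor, hc]; grind
  have d₀d₁ : n 2 0 ⊕₂ n 2 1 ⊕₂ (n 0 2 ⊕₂ n 1 2) = n 3 0 ⊕₂ n 3 1 :=
    heq (lt (lt (hn _ _) (hn _ _)) (lt (hn _ _) (hn _ _))) (lt (hn _ _) (hn _ _)) <| by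
      simp only [decode_xor, hnx]; grind
  have d₀d₁' : cubeCode (n 2 0) ⊕₂ cubeCode (n 2 1) ⊕₂ (cubeCode (n 0 2) ⊕₂ cubeCode (n 1 2)) =
      cubeCode (n 3 0) ⊕₂ cubeCode (n 3 1) :=
    heq (lt (lt (lt₃ _) (lt₃ _)) (lt (lt₃ _) (lt₃ _))) (lt (lt₃ _) (lt₃ _)) <| by
      simp only [decode_xor, hc]; grind
  have d₂ : n 0 1 ⊕₂ n 0 2 ⊕₂ n 2 1 ⊕₂ t ⊕₂ n 3 0 = n 3 2 :=
    heq (lt (lt (lt (lt (hn _ _) (hn _ _)) (hn _ _)) ht) (hn _ _)) (hn _ _) <| by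
      simp only [decode_xor, hnx]; grind
  have word : cubeCode (n 2 0) ⊕₂ cubeCode (n 3 0) ⊕₂ (cubeCode (n 0 1) ⊕₂ cubeCode (n 1 1)) =
      cubeCode (n 2 2) ⊕₂ cubeCode (n 3 2) :=
    heq (lt (lt (lt₃ _) (lt₃ _)) (lt (lt₃ _) (lt₃ _))) (lt (lt₃ _) (lt₃ _)) <| by
      simp only [decode_xor, hc]; grind
  have s₁ := List.all_eq_true.1 hs (n 0 1) (List.mem_range.2 (hn 0 1))
  dsimp only at s₁
  rw [b₁, a₂b₂, a₂b₂'] at s₁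
  have s₂ := List.all_eq_true.1 (forPair_spec (hn 0 2) (hn 1 2) (hne (by decide)) s₁)
    (n 2 0) (List.mem_range.2 (hn 2 0))
  rw [two_le (by decide) (by decide), Bool.false_or, c₁c₂, c₁c₂'] at s₂
  have s₃ := forPair_spec (hn 2 1) (hn 2 2) (hne (by decide)) s₂
  rw [c₂, two_le (by decide) (by decide), two_le (by decide) (by decide), Bool.false_or,
    Bool.false_or, b₂, d₀d₁, d₀d₁'] at s₃
  have s₄ := forPair_spec (hn 3 0) (hn 3 1) (hne (by decide)) s₃
  rw [d₂, word, Nat.beq_refl] at s₄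
  exact Bool.false_ne_true s₄

end Config

section Ratio

variable {F : Type*} [Field F] [CharP F 2]

theorem exists_orbit_mem : ∀ n < 128, 2 ≤ n →
    ∃ m ∈ [n, 1 ⊕₂ n, expCode (127 - logCode n), 1 ⊕₂ expCode (127 - logCode n),
      expCode (127 - logCode (1 ⊕₂ n)), 1 ⊕₂ expCode (127 - logCode (1 ⊕₂ n))],
    m < 128 ∧ m ≠ 0 ∧ ∃ j < 7, expCode (logCode m * 2 ^ j) ∈ [2, 12, 24] := by
  decide +kernel

theorem HasRatio.pow_two_pow {t : F} (h : HasRatio t) (j : ℕ) : HasRatio (t ^ 2 ^ j) := by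
  induction j with
  | zero => simpa using h
  | succ j ih => simpa only [pow_succ, pow_mul] using ih.sq

theorem HasRatio.one_xor {α : F} {n : ℕ} (h : HasRatio (decode α n)) :
    HasRatio (decode α (1 ⊕₂ n)) := by
  rw [decode_xor, decode_one]
  exact h.one_add

theorem HasRatio.expCode_sub {α : F} (hα : α ^ 7 = α + 1) {n : ℕ} (hn : n < 128) (hn₀ : n ≠ 0)
    (h : HasRatio (decode α n)) : HasRatio (decode α (expCode (127 - logCode n))) := by
  have hl : logCode n ≤ 127 := Nat.and_le_right
  have e : decode α (expCode (127 - logCode n)) = (decode α n)⁻¹ := by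
    rw [decode_expCode hα, decode_eq_pow hα hn hn₀]
    refine eq_inv_of_mul_eq_one_left ?_
    rw [← pow_add, Nat.sub_add_cancel hl, pow_127_eq_one hα]
  rw [e]
  exact h.inv

theorem not_hasRatio_decode [Fintype F] (hF : Fintype.card F = 128) {α : F}
    (hα : α ^ 7 = α + 1) {n : ℕ} (hn : n < 128) (hn₂ : 2 ≤ n) : ¬ HasRatio (decode α n) := by
  intro h
  obtain ⟨m, hm, hm', hm₀, j, -, hj⟩ := exists_orbit_mem n hn hn₂
  have h₁ : 1 ⊕₂ n ≠ 0 := fun e => by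
    have := Nat.xor_eq_zero_iff.1 e
    lia
  have hr : HasRatio (decode α m) := by
    have hi := h.expCode_sub hα hn (by lia)
    have hi' := h.one_xor.expCode_sub hα (xor_lt (by lia) hn) h₁
    simp only [List.mem_cons, List.not_mem_nil, or_false] at hm
    rcases hm with rfl | rfl | rfl | rfl | rfl | rfl
    exacts [h, h.one_xor, hi, hi.one_xor, hi', hi'.one_xor]
  have hr' : HasRatio (decode α (expCode (logCode m * 2 ^ j))) := by
    rw [decode_expCode hα, pow_mul, ← decode_eq_pow hα hm' hm₀]
    exact hr.pow_two_pow j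
  obtain ⟨s₁, s₂, s₃⟩ := search_eq_true
  simp only [List.mem_cons, List.not_mem_nil, or_false] at hj
  rcases hj with e | e | e <;> rw [e] at hr'
  exacts [not_hasRatio_of_search hF hα (by lia) s₁ hr',
    not_hasRatio_of_search hF hα (by lia) s₂ hr', not_hasRatio_of_search hF hα (by lia) s₃ hr']

theorem not_isConfig [Fintype F] (hF : Fintype.card F = 128) {α : F} (hα : α ^ 7 = α + 1)
    (x : Fin 4 → Fin 3 → F) : ¬ IsConfig x := by
  intro h
  have hu : x 0 0 + x 1 0 ≠ 0 := fun e => h.ne (by decide) (CharTwo.add_eq_zero.1 e)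
  have hr : HasRatio ((x 0 1 + x 1 1) / (x 0 0 + x 1 0)) :=
    ⟨x, h, (div_mul_cancel₀ _ hu).symm⟩
  obtain ⟨n, hn, e⟩ := exists_decode hF hα ((x 0 1 + x 1 1) / (x 0 0 + x 1 0))
  rw [← e] at hr
  refine not_hasRatio_decode hF hα hn ?_ hr
  by_contra! hlt
  interval_cases n
  · rw [decode_zero, eq_comm, div_eq_zero_iff, or_iff_left hu, CharTwo.add_eq_zero] at e
    exact h.ne (by decide) e
  · rw [decode_one, eq_comm, div_eq_one_iff_eq hu] at e
    have hs := h.sum_ab 1 (by lia)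
    simp only [Fin.sum_univ_three, pow_one] at hs
    rw [e, CharTwo.add_self_eq_zero, zero_add, CharTwo.add_eq_zero] at hs
    exact h.ne (by decide) hs

end Ratio

section Code

/-- The dot product of two vectors in `𝔽₂ ^ 4`, given by their bits: bit `j` of `27030` is
the parity of the number of ones in `j`. -/
def dot (a b : ℕ) : Bool := Nat.testBit 27030 (Nat.land a b)

theorem dot_xor : ∀ t < 16, ∀ v < 16, ∀ w < 16, dot t (v ⊕₂ w) = (dot t v ^^ dot t w) := by
  decide +kernel

theorem card_dot_le : ∀ v < 16, ((Finset.Ico 1 16).filter fun t => dot t v).card ≤ 8 := by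
  decide +kernel

theorem card_dot_zero : ((Finset.Ico 1 16).filter fun t => dot t 0).card = 0 := by
  decide +kernel

theorem card_orthogonal : ∀ v < 16, 7 ≤ ((Finset.Ico 1 16).filter fun t => ¬ dot t v).card := by
  decide +kernel

theorem card_orthogonal_dot_le : ∀ v < 16, v ≠ 0 → ∀ w < 16,
    (((Finset.Ico 1 16).filter fun t => ¬ dot t v).filter fun t => dot t w).card ≤ 4 := by
  decide +kernel

theorem card_dot_eq_eight : ∀ t < 16, t ≠ 0 →
    ((Finset.Ico 1 16).filter fun v => dot t v).card = 8 := by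
  decide +kernel

set_option synthInstance.maxHeartbeats 400000 in
set_option synthInstance.maxSize 4000 in
theorem eq_xor_of_forall_not_dot : ∀ a < 16, ∀ b < 16, ∀ c < 16,
    (a ≠ 0 ∧ b ≠ 0 ∧ c ≠ 0 ∧ a ≠ b ∧ a ≠ c ∧ b ≠ c) →
    (∀ t < 16, ¬ (dot t a ∧ dot t b ∧ dot t c)) → c = a ⊕₂ b := by
  decide +kernel

set_option synthInstance.maxHeartbeats 400000 in
set_option synthInstance.maxSize 4000 in
theorem exists_dual_pair : ∀ a < 16, ∀ b < 16, (a ≠ 0 ∧ b ≠ 0 ∧ a ≠ b) →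
    ∃ r₂ < 16, ∃ r₃ < 16, (r₂ ≠ 0 ∧ r₃ ≠ 0 ∧ r₂ ≠ r₃) ∧
      ∀ v < 16, (v ≠ 0 ∧ v ≠ a ∧ v ≠ b ∧ v ≠ a ⊕₂ b) → dot r₂ v ∨ dot r₃ v := by
  decide +kernel

set_option synthInstance.maxHeartbeats 400000 in
set_option synthInstance.maxSize 4000 in
theorem exists_complement_pair : ∀ r₂ < 16, ∀ r₃ < 16, r₂ ≠ 0 ∧ r₃ ≠ 0 ∧ r₂ ≠ r₃ →
    ∃ r₀ < 16, ∃ r₁ < 16, ∀ v < 16, v ≠ 0 → dot r₀ v ∨ dot r₁ v ∨ dot r₂ v ∨ dot r₃ v := by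
  decide +kernel

theorem mul_card_le_sum (A : Finset ℕ) (hA : A ⊆ Finset.Ico 1 16) (col : Fin 12 → ℕ)
    (h : ∀ t < 16, t ≠ 0 → 6 ≤ (Finset.univ.filter fun i => dot t (col i)).card) :
    6 * A.card ≤ ∑ i, (A.filter fun t => dot t (col i)).card := by
  have e := Finset.sum_card_bipartiteAbove_eq_sum_card_bipartiteBelow (s := A)
    (t := (Finset.univ : Finset (Fin 12))) fun t i => (dot t (col i) : Prop)
  refine le_trans ?_ e.le
  rw [mul_comm, ← smul_eq_mul]
  refine Finset.card_nsmul_le_sum _ _ _ fun t ht => ?_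
  have := Finset.mem_Ico.1 (hA ht)
  exact h t (by lia) (by lia)

theorem exists_systematic_rows (col : Fin 12 → ℕ) (hcol : ∀ i, col i < 16)
    (h : ∀ t < 16, t ≠ 0 → 6 ≤ (Finset.univ.filter fun i => dot t (col i)).card) :
    ∃ r : Fin 4 → ℕ, (∀ k, r k < 16) ∧ (Function.Injective fun i k => dot (r k) (col i)) ∧
      ∀ i, dot (r 2) (col i) ∨ dot (r 3) (col i) := by
  have h₀ (i) : col i ≠ 0 := by
    intro hi
    have h₁ := mul_card_le_sum _ subset_rfl col h
    rw [← Finset.add_sum_erase _ _ (Finset.mem_univ i), hi, card_dot_zero] at h₁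
    have h₂ := Finset.sum_le_card_nsmul (Finset.univ.erase i) _ 8 fun j _ =>
      card_dot_le (col j) (hcol j)
    rw [Finset.card_erase_of_mem (Finset.mem_univ i)] at h₂
    simp at h₁ h₂
    lia
  have hinj : Function.Injective col := by
    intro i j hij
    by_contra hne
    have h₁ := mul_card_le_sum _ (Finset.filter_subset (fun t => ¬ dot t (col i)) _) col h
    have h₂ := card_orthogonal (col i) (hcol i)
    have hz : ∀ k, col k = col i → (((Finset.Ico 1 16).filter fun t => ¬ dot t (col i)).filter
        fun t => dot t (col k)).card = 0 := by
      intro k hk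
      rw [Finset.card_eq_zero, Finset.filter_eq_empty_iff]
      intro t ht
      rw [hk]
      exact (Finset.mem_filter.1 ht).2
    rw [← Finset.add_sum_erase _ _ (Finset.mem_univ i), hz i rfl,
      ← Finset.add_sum_erase _ _ (Finset.mem_erase.2 ⟨Ne.symm hne, Finset.mem_univ j⟩),
      hz j hij.symm] at h₁
    have h₃ := Finset.sum_le_card_nsmul ((Finset.univ.erase i).erase j) _ 4 fun k _ =>
      card_orthogonal_dot_le (col i) (hcol i) (h₀ i) (col k) (hcol k)
    rw [Finset.card_erase_of_mem (Finset.mem_erase.2 ⟨Ne.symm hne, Finset.mem_univ j⟩),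
      Finset.card_erase_of_mem (Finset.mem_univ i)] at h₃
    simp only [Finset.card_univ, Fintype.card_fin, smul_eq_mul] at h₃
    lia
  have himg : Finset.univ.image col ⊆ Finset.Ico 1 16 := by
    intro v hv
    obtain ⟨i, -, rfl⟩ := Finset.mem_image.1 hv
    exact Finset.mem_Ico.2 ⟨Nat.pos_of_ne_zero (h₀ i), hcol i⟩
  have hcard : (Finset.Ico 1 16 \ Finset.univ.image col).card = 3 := by
    rw [Finset.card_sdiff_of_subset himg, Finset.card_image_of_injective _ hinj]
    simp
  obtain ⟨a, b, c, hab, hac, hbc, habc⟩ := Finset.card_eq_three.1 hcard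
  have hmem : ∀ v ∈ ({a, b, c} : Finset ℕ), v < 16 ∧ v ≠ 0 := by
    intro v hv
    rw [← habc, Finset.mem_sdiff, Finset.mem_Ico] at hv
    lia
  have ha := hmem a (by simp)
  have hb := hmem b (by simp)
  have hc := hmem c (by simp)
  have hmiss : ∀ t < 16, ¬ (dot t a ∧ dot t b ∧ dot t c) := by
    rintro t ht ⟨ta, tb, tc⟩
    have ht₀ : t ≠ 0 := by
      rintro rfl
      simp [dot] at ta
    have h₁ := h t ht ht₀
    have h₂ := card_dot_eq_eight t ht ht₀
    rw [← Finset.sdiff_union_of_subset himg, habc, Finset.filter_union,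
      Finset.card_union_of_disjoint (Finset.disjoint_filter_filter
        (habc ▸ Finset.sdiff_disjoint)),
      Finset.filter_true_of_mem (by simp [ta, tb, tc]), ← habc, hcard, Finset.filter_image,
      Finset.card_image_of_injective _ hinj] at h₂
    lia
  obtain rfl := eq_xor_of_forall_not_dot a ha.1 b hb.1 c hc.1
    ⟨ha.2, hb.2, hc.2, hab, hac, hbc⟩ hmiss
  obtain ⟨r₂, hr₂, r₃, hr₃, hr, hU⟩ := exists_dual_pair a ha.1 b hb.1 ⟨ha.2, hb.2, hab⟩
  obtain ⟨r₀, hr₀, r₁, hr₁, hV⟩ := exists_complement_pair r₂ hr₂ r₃ hr₃ hr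
  refine ⟨![r₀, r₁, r₂, r₃], ?_, ?_, ?_⟩
  · simp [Fin.forall_fin_succ, *]
  · intro i j hij
    by_contra hne
    have hx : col i ⊕₂ col j < 16 := Nat.xor_lt_two_pow (n := 4) (hcol i) (hcol j)
    have key (k : Fin 4) (hk : ![r₀, r₁, r₂, r₃] k < 16) :
        dot (![r₀, r₁, r₂, r₃] k) (col i ⊕₂ col j) = false := by
      rw [dot_xor _ hk _ (hcol i) _ (hcol j)]
      simpa using congrFun hij k
    have := hV _ hx fun e => hne (hinj (Nat.xor_eq_zero_iff.1 e))
    have k₀ := key 0 hr₀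
    have k₁ := key 1 hr₁
    have k₂ := key 2 hr₂
    have k₃ := key 3 hr₃
    simp_all
  · intro i
    have hi : col i ∉ ({a, b, a ⊕₂ b} : Finset ℕ) := by
      rw [← habc]
      simp
    simp only [Finset.mem_insert, Finset.mem_singleton, not_or] at hi
    exact hU _ (hcol i) ⟨h₀ i, hi⟩

end Code

section Words

variable {F : Type*} [Field F] [Algebra (ZMod 2) F]

/-- The map whose kernel consists of the affine dependencies of `x`. -/
noncomputable def parity {ι : Type*} [Fintype ι] (x : ι → F) :
    (ι → ZMod 2) →ₗ[ZMod 2] ZMod 2 × F :=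
  Fintype.linearCombination (ZMod 2) fun i => (1, x i)

theorem sum_eq_zero_of_mem_ker {ι : Type*} [Fintype ι] {x : ι → F} {w : ι → ZMod 2}
    (hw : w ∈ LinearMap.ker (parity x)) : ∑ i, w i = 0 ∧ ∑ i, w i • x i = 0 := by
  rw [LinearMap.mem_ker, parity, Fintype.linearCombination_apply, Prod.ext_iff] at hw
  simpa [Prod.fst_sum, Prod.snd_sum] using hw

/-- The combination of `g` with coefficients the bits of `t`. -/
def word {ι : Type*} (g : Fin 4 → ι → ZMod 2) (t : ℕ) : ι → ZMod 2 :=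
  ∑ k : Fin 4, (if t.testBit k then 1 else 0 : ZMod 2) • g k

/-- The coordinates of `g` at `i`, as the bits of a number. -/
def column {ι : Type*} (g : Fin 4 → ι → ZMod 2) (i : ι) : ℕ :=
  ∑ k : Fin 4, (g k i).val * 2 ^ (k : ℕ)

theorem column_lt {ι : Type*} (g : Fin 4 → ι → ZMod 2) (i : ι) : column g i < 16 := by
  have h (k) := ZMod.val_lt (g k i)
  have := h 0
  have := h 1
  have := h 2
  have := h 3
  simp only [column, Fin.sum_univ_four]
  norm_num
  lia

theorem sum_testBit_ne_zero_iff : ∀ a b c d : ZMod 2, ∀ t < 16,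
    ((if t.testBit 0 then a else 0) + (if t.testBit 1 then b else 0) +
      (if t.testBit 2 then c else 0) + (if t.testBit 3 then d else 0) ≠ 0 ↔
    dot t (a.val + b.val * 2 + c.val * 4 + d.val * 8)) := by
  decide +kernel

theorem word_ne_zero_iff {ι : Type*} (g : Fin 4 → ι → ZMod 2) {t : ℕ} (ht : t < 16) (i : ι) :
    word g t i ≠ 0 ↔ dot t (column g i) := by
  have hc : column g i = (g 0 i).val + (g 1 i).val * 2 + (g 2 i).val * 4 + (g 3 i).val * 8 := by
    norm_num [column, Fin.sum_univ_four]
  have hw : word g t i = (if t.testBit 0 then g 0 i else 0) + (if t.testBit 1 then g 1 i else 0) +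
      (if t.testBit 2 then g 2 i else 0) + (if t.testBit 3 then g 3 i else 0) := by
    simp only [word, Fin.sum_univ_four, Pi.add_apply, ite_smul, one_smul, zero_smul,
      ite_apply]
    rfl
  rw [hc, hw, sum_testBit_ne_zero_iff _ _ _ _ t ht]

theorem exists_testBit_ne : ∀ t < 16, t ≠ 0 → ∃ k : Fin 4, t.testBit k := by decide +kernel

theorem word_ne_zero {ι : Type*} {g : Fin 4 → ι → ZMod 2} (hg : LinearIndependent (ZMod 2) g)
    {t : ℕ} (ht : t < 16) (h : t ≠ 0) : word g t ≠ 0 := by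
  intro hw
  obtain ⟨k, hk⟩ := exists_testBit_ne t ht h
  have := Fintype.linearIndependent_iff.1 hg _ hw k
  simp [hk] at this

theorem exists_linearIndependent_ker [Fintype F] (hF : Fintype.card F = 128) (x : Fin 12 → F) :
    ∃ g : Fin 4 → Fin 12 → ZMod 2, LinearIndependent (ZMod 2) g ∧
      ∀ k, g k ∈ LinearMap.ker (parity x) := by
  have hrank : Module.finrank (ZMod 2) F = 7 := by
    have h := Module.card_eq_pow_finrank (K := ZMod 2) (V := F)
    rw [hF, ZMod.card] at h
    exact Nat.pow_right_injective le_rfl (h.symm.trans (by norm_num))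
  have h := (parity x).finrank_range_add_finrank_ker
  have h' := (parity x).range.finrank_le
  rw [Module.finrank_prod, hrank, Module.finrank_self] at h'
  rw [Module.finrank_fin_fun] at h
  obtain ⟨g, hg⟩ := exists_linearIndependent_of_le_finrank
    (show 4 ≤ Module.finrank (ZMod 2) (LinearMap.ker (parity x)) by lia)
  exact ⟨fun k => g k, hg.map' (Submodule.subtype _) (Submodule.ker_subtype _), fun k => (g k).2⟩

end Words

section Agreement

variable {F : Type*} [Field F] [CharP F 2]

theorem six_le_card {T : Finset F} (hT : T.Nonempty) (h₀ : (T.card : F) = 0)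
    (h₁ : ∑ x ∈ T, x = 0) (h₃ : ∑ x ∈ T, x ^ 3 = 0) : 6 ≤ T.card := by
  classical
  have h2 : (2 : F) = 0 := CharTwo.two_eq_zero
  obtain ⟨m, hm⟩ := (CharP.cast_eq_zero_iff F 2 _).1 h₀
  by_contra! hlt
  have hpos := hT.card_pos
  have hcard : T.card = 2 ∨ T.card = 4 := by lia
  rcases hcard with h | h
  · obtain ⟨x, y, hxy, rfl⟩ := Finset.card_eq_two.1 h
    rw [Finset.sum_pair hxy] at h₁
    exact hxy (CharTwo.add_eq_zero.1 h₁)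
  · obtain ⟨a, ha⟩ := hT
    rw [← Finset.insert_erase ha] at h₁ h₃
    rw [Finset.sum_insert (Finset.notMem_erase _ _)] at h₁ h₃
    have hc : (T.erase a).card = 3 := by rw [Finset.card_erase_of_mem ha, h]
    obtain ⟨x, y, z, hxy, hxz, hyz, e⟩ := Finset.card_eq_three.1 hc
    rw [e] at h₁ h₃
    rw [Finset.sum_insert (by simp [hxy, hxz]), Finset.sum_pair hyz] at h₁ h₃
    have key : (x + y) * ((y + z) * (x + z)) = 0 := by
      have ha : a = x + y + z := by linear_combination h₁ - (x + y + z) * h2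
      subst ha
      linear_combination h₃ - (x ^ 3 + y ^ 3 + z ^ 3 + (x + y) * ((y + z) * (x + z))) * h2
    simp only [mul_eq_zero, CharTwo.add_eq_zero] at key
    tauto

variable [Algebra (ZMod 2) F]

theorem sum_smul_pow_eq_zero {ι : Type*} [Fintype ι] {x : ι → F} {L : F →ₗ[ZMod 2] F} {c : F}
    (hx : ∀ i, x i ^ 3 = L (x i) + c) {w : ι → ZMod 2} (h₀ : ∑ i, w i = 0)
    (h₁ : ∑ i, w i • x i = 0) : ∀ k ≤ 3, ∑ i, w i • x i ^ k = 0 := by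
  have hconst (y : F) : ∑ i, w i • y = 0 := by rw [← Finset.sum_smul, h₀, zero_smul]
  intro k hk
  interval_cases k
  · simpa using hconst 1
  · simpa using h₁
  · have h := congrArg (frobenius F 2) h₁
    rw [map_sum, map_zero] at h
    rw [← h]
    refine Finset.sum_congr rfl fun i _ => ?_
    have hw : ∀ u : ZMod 2, u ^ 2 = u := by decide
    rw [frobenius_def, smul_pow, hw]
  · simp only [hx, smul_add, Finset.sum_add_distrib, hconst, ← map_smul, ← map_sum, h₁, map_zero,
      add_zero]

theorem six_le_card_ne_zero {ι : Type*} [Fintype ι] {x : ι → F} (hinj : Function.Injective x)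
    {w : ι → ZMod 2} (hw : w ≠ 0) (h : ∀ k ≤ 3, ∑ i, w i • x i ^ k = 0) :
    6 ≤ (Finset.univ.filter fun i => w i ≠ 0).card := by
  classical
  have hsum (k) (hk : k ≤ 3) :
      ∑ y ∈ (Finset.univ.filter fun i => w i ≠ 0).map ⟨x, hinj⟩, y ^ k = 0 := by
    rw [Finset.sum_map, Finset.sum_filter]
    refine Eq.trans ?_ (h k hk)
    refine Finset.sum_congr rfl fun i _ => ?_
    have hu : ∀ u : ZMod 2, u = 0 ∨ u = 1 := by decide
    rcases hu (w i) with e | e <;> simp [e]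
  rw [← Finset.card_map ⟨x, hinj⟩]
  refine six_le_card ?_ ?_ ?_ ?_
  · obtain ⟨i, hi⟩ := Function.ne_iff.1 hw
    exact ⟨x i, Finset.mem_map.2 ⟨i, by simpa using hi, rfl⟩⟩
  · simpa using hsum 0 (by norm_num)
  · simpa using hsum 1 (by norm_num)
  · exact hsum 3 le_rfl

/-- The values of the four systematic rows at the twelve positions of a configuration. -/
def pattern (p : Fin 4) (q : Fin 3) : Fin 4 → Bool := ![p = 0 ∨ p = 2, p = 0 ∨ p = 1, q ≠ 1, q ≠ 0]

theorem pattern_injective : Function.Injective (Function.uncurry pattern) := by decide +kernel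

theorem pattern_mem : ∀ p q, pattern p q 2 ∨ pattern p q 3 := by decide +kernel

theorem exists_positions {e : Fin 12 → Fin 4 → Bool} (he : Function.Injective e)
    (h : ∀ i, e i 2 ∨ e i 3) :
    ∃ pos : Fin 4 × Fin 3 ≃ Fin 12, ∀ p q, e (pos (p, q)) = pattern p q := by
  have hbij : Function.Bijective
      (fun i => ⟨e i, h i⟩ : Fin 12 → {v : Fin 4 → Bool // v 2 ∨ v 3}) :=
    (Fintype.bijective_iff_injective_and_card _).2
      ⟨fun i j hij => he (congrArg Subtype.val hij), by decide +kernel⟩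
  choose pos hpos using fun a : Fin 4 × Fin 3 => hbij.2 ⟨pattern a.1 a.2, pattern_mem a.1 a.2⟩
  have hpos' (a) : e (pos a) = pattern a.1 a.2 := congrArg Subtype.val (hpos a)
  have hinj : Function.Injective pos := fun a b hab =>
    pattern_injective ((hpos' a).symm.trans (hab ▸ hpos' b))
  exact ⟨Equiv.ofBijective pos
    ((Fintype.bijective_iff_injective_and_card _).2 ⟨hinj, by simp⟩), fun p q => hpos' (p, q)⟩

theorem not_injective_of_cube_eq [Fintype F] (hF : Fintype.card F = 128) {α : F}
    (hα : α ^ 7 = α + 1) {x : Fin 12 → F} {L : F →ₗ[ZMod 2] F} {c : F}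
    (hx : ∀ i, x i ^ 3 = L (x i) + c) : ¬ Function.Injective x := by
  intro hinj
  obtain ⟨g, hg, hker⟩ := exists_linearIndependent_ker hF x
  have hword (t : ℕ) : ∀ n ≤ 3, ∑ i, word g t i • x i ^ n = 0 := by
    have hmem : word g t ∈ LinearMap.ker (parity x) :=
      Submodule.sum_mem _ fun k _ => Submodule.smul_mem _ _ (hker k)
    obtain ⟨h₀, h₁⟩ := sum_eq_zero_of_mem_ker hmem
    exact sum_smul_pow_eq_zero hx h₀ h₁
  obtain ⟨r, hr, hrinj, hr₂₃⟩ := exists_systematic_rows (column g) (column_lt g) fun t ht h => by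
    simpa only [word_ne_zero_iff g ht] using
      six_le_card_ne_zero hinj (word_ne_zero hg ht h) (hword t)
  obtain ⟨pos, hpos⟩ := exists_positions hrinj hr₂₃
  have hsum (k : Fin 4) (n : ℕ) (hn : n ≤ 3) :
      ∑ p, ∑ q, (if pattern p q k then x (pos (p, q)) ^ n else 0) = 0 := by
    refine Eq.trans ?_ (hword (r k) n hn)
    rw [← pos.sum_comp, Fintype.sum_prod_type]
    refine Finset.sum_congr rfl fun p _ => Finset.sum_congr rfl fun q _ => ?_
    rw [← hpos]
    have h := word_ne_zero_iff g (hr k) (pos (p, q))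
    have hu : ∀ u : ZMod 2, u ≠ 0 → u = 1 := by decide
    split_ifs with hd
    · rw [hu _ (h.2 hd), one_smul]
    · rw [not_not.1 (mt h.1 hd), zero_smul]
  refine not_isConfig hF hα (fun p q => x (pos (p, q)))
    ⟨fun a b hab => pos.injective (hinj hab), fun n hn => ?_, fun n hn => ?_, fun n hn => ?_⟩
  · have h := hsum 1 n hn
    simp [pattern, Fin.sum_univ_four, Fin.sum_univ_three] at h ⊢
    linear_combination h
  · have h := hsum 0 n hn
    simp [pattern, Fin.sum_univ_four, Fin.sum_univ_three] at h ⊢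
    linear_combination h
  · have h₂ := hsum 2 n hn
    have h₃ := hsum 3 n hn
    simp [pattern, Fin.sum_univ_four, Fin.sum_univ_three] at h₂ h₃
    have h₀₂ : ∑ p, x (pos (p, 0)) ^ n = ∑ p, x (pos (p, 2)) ^ n := by
      rw [← CharTwo.add_eq_zero, Fin.sum_univ_four, Fin.sum_univ_four]
      linear_combination h₂
    have h₁₂ : ∑ p, x (pos (p, 1)) ^ n = ∑ p, x (pos (p, 2)) ^ n := by
      rw [← CharTwo.add_eq_zero, Fin.sum_univ_four, Fin.sum_univ_four]
      linear_combination h₃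
    have h (i : Fin 3) : ∑ p, x (pos (p, i)) ^ n = ∑ p, x (pos (p, 2)) ^ n := by
      fin_cases i
      exacts [h₀₂, h₁₂, rfl]
    exact fun i j => (h i).trans (h j).symm

end Agreement

theorem ncard_ne_add_ncard_eq {V W : Type*} [Finite V] (f g : V → W) :
    {x | f x ≠ g x}.ncard + {x | f x = g x}.ncard = Nat.card V := by
  rw [add_comm]
  exact Set.ncard_add_ncard_compl {x | f x = g x}

section Existence

variable {F : Type*} [Field F] [CharP F 2]

open Polynomial in
theorem exists_pow_seven_eq [Fintype F] (hF : Fintype.card F = 128) :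
    ∃ α : F, α ^ 7 = α + 1 := by
  have hdeg : (X ^ 7 - (X + 1) : F[X]).degree = 7 := by compute_degree!
  have hdvd : (X ^ 7 - (X + 1) : F[X]) ∣ X ^ 128 - X := by
    have := AdjoinRoot.nontrivial (X ^ 7 - (X + 1) : F[X]) (by rw [hdeg]; norm_num)
    have := charP_of_injective_algebraMap'
      (A := AdjoinRoot (X ^ 7 - (X + 1) : F[X])) F 2
    rw [← AdjoinRoot.mk_eq_zero, map_sub, map_pow, AdjoinRoot.mk_X, sub_eq_zero]
    refine pow_128_eq_self ?_
    have h := AdjoinRoot.mk_self (f := (X ^ 7 - (X + 1) : F[X]))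
    rwa [map_sub, map_pow, map_add, map_one, AdjoinRoot.mk_X, sub_eq_zero] at h
  have hsplits : Splits (X ^ 128 - X : F[X]) := by
    rw [← hF, ← Nat.card_eq_fintype_card]
    exact splits_X_pow_nat_card_sub_X
  obtain ⟨α, hα⟩ := (hsplits.of_dvd (FiniteField.X_pow_card_sub_X_ne_zero F (by norm_num))
    hdvd).exists_eval_eq_zero (by rw [hdeg]; norm_num)
  exact ⟨α, sub_eq_zero.1 (by simpa using hα)⟩

/-- The linear map `x ↦ α ^ 26 x ^ 4 + α ^ 30 x ^ 16 + α ^ 108 x ^ 32 + x ^ 64` which, up to a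
constant, agrees with the cube at eleven points. -/
def bestLinear [Algebra (ZMod 2) F] (α : F) : F →ₗ[ZMod 2] F :=
  (AddMonoidHom.mk' (fun x => α ^ 26 * x ^ 2 ^ 2 + α ^ 30 * x ^ 2 ^ 4 + α ^ 108 * x ^ 2 ^ 5 +
    x ^ 2 ^ 6) fun x y => by simp only [add_pow_char_pow]; ring).toZModLinearMap 2

/-- The code of `bestLinear α x + α ^ 85`, where `x ≠ 0` has code `n`. -/
def bestAffineCode (n : ℕ) : ℕ :=
  expCode (26 + logCode n * 4) ⊕₂ expCode (30 + logCode n * 16) ⊕₂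
    expCode (108 + logCode n * 32) ⊕₂ expCode (logCode n * 64) ⊕₂ expCode 85

theorem decode_bestAffineCode [Algebra (ZMod 2) F] {α : F} (hα : α ^ 7 = α + 1) {n : ℕ}
    (hn : n < 128) (h : n ≠ 0) :
    decode α (bestAffineCode n) = bestLinear α (decode α n) + α ^ 85 := by
  change _ = α ^ 26 * _ ^ 4 + α ^ 30 * _ ^ 16 + α ^ 108 * _ ^ 32 + _ ^ 64 + α ^ 85
  simp only [bestAffineCode, decode_xor, decode_expCode hα, decode_eq_pow hα hn h, pow_add, pow_mul]

theorem card_bestAffineCode_eq_cubeCode :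
    ((Finset.Ico 1 128).filter fun n => bestAffineCode n = cubeCode n).card = 11 := by
  decide +kernel

theorem eleven_le_ncard [Algebra (ZMod 2) F] [Finite F] {α : F} (hα : α ^ 7 = α + 1) :
    11 ≤ {x : F | x ^ 3 = bestLinear α x + α ^ 85}.ncard := by
  rw [← card_bestAffineCode_eq_cubeCode, ← Set.ncard_coe_finset]
  refine Set.ncard_le_ncard_of_injOn (decode α) ?_ ?_
  · intro n hn
    simp only [Finset.coe_filter, Finset.mem_Ico, Set.mem_ofPred_eq] at hn ⊢
    rw [← decode_cubeCode hα hn.1.2, ← hn.2, decode_bestAffineCode hα hn.1.2 (by lia)]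
  · exact (decode_injOn hα).mono fun n hn => by
      simp only [Finset.coe_filter, Finset.mem_Ico, Set.mem_ofPred_eq] at hn
      exact hn.1.2

theorem ncard_cube_eq_le [Algebra (ZMod 2) F] [Fintype F] (hF : Fintype.card F = 128)
    (L : F →ₗ[ZMod 2] F) (c : F) : {x : F | x ^ 3 = L x + c}.ncard ≤ 11 := by
  obtain ⟨α, hα⟩ := exists_pow_seven_eq hF
  by_contra! h
  obtain ⟨T, hT, hcard⟩ := Set.exists_subset_card_eq (n := 12) h
  have e := (Set.ncard_eq_toFinset_card T).symm.trans hcard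
  exact not_injective_of_cube_eq hF hα
    (x := fun i => (Finset.equivFinOfCardEq e).symm i) (L := L) (c := c)
    (fun i => hT ((Set.Finite.mem_toFinset _).1 ((Finset.equivFinOfCardEq e).symm i).2))
    (Subtype.val_injective.comp (Equiv.injective _))

end Existence

end GoldCube

theorem gold_cube_dim7_dist_to_affine
    (f : GaloisField 2 7 → GaloisField 2 7) (hf : ∀ x, f x = x ^ 3) :
    dA f = 117 ∧
      (∀ (L : GaloisField 2 7 →ₗ[ZMod 2] GaloisField 2 7) (c : GaloisField 2 7),
          117 ≤ {x : GaloisField 2 7 | f x ≠ L x + c}.ncard) ∧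
      (∃ (L : GaloisField 2 7 →ₗ[ZMod 2] GaloisField 2 7) (c : GaloisField 2 7),
          {x : GaloisField 2 7 | f x ≠ L x + c}.ncard = 117) := by
  obtain rfl : f = fun x => x ^ 3 := funext hf
  have := Fintype.ofFinite (GaloisField 2 7)
  have hN : Nat.card (GaloisField 2 7) = 128 := by
    rw [GaloisField.card 2 7 (by norm_num)]
    norm_num
  have hF : Fintype.card (GaloisField 2 7) = 128 := Nat.card_eq_fintype_card.symm.trans hN
  have hle (L : GaloisField 2 7 →ₗ[ZMod 2] GaloisField 2 7) (c : GaloisField 2 7) :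
      117 ≤ {x : GaloisField 2 7 | x ^ 3 ≠ L x + c}.ncard := by
    have h₁ := GoldCube.ncard_ne_add_ncard_eq (fun x => x ^ 3) fun x => L x + c
    have h₂ := GoldCube.ncard_cube_eq_le hF L c
    lia
  obtain ⟨α, hα⟩ := GoldCube.exists_pow_seven_eq hF
  have heq : {x | x ^ 3 ≠ GoldCube.bestLinear α x + α ^ 85}.ncard = 117 := by
    refine le_antisymm ?_ (hle _ _)
    have h₁ := GoldCube.ncard_ne_add_ncard_eq (fun x => x ^ 3) fun x =>
      GoldCube.bestLinear α x + α ^ 85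
    have h₂ := GoldCube.eleven_le_ncard hα
    lia
  refine ⟨le_antisymm (Nat.sInf_le ⟨_, _, heq.symm⟩) ?_, hle, _, _, heq⟩
  refine le_csInf ⟨_, _, _, heq.symm⟩ ?_
  rintro _ ⟨L, c, rfl⟩
  exact hle L c
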